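/- arXiv:2109.02239 — 2 statements merged into one kernel-verified Lean document; each statement's English description precedes it below -/
import Mathlib

section
/- (Corollary 1, n → ∞ part) Let θ₀, θ₁ ∈ (0,1) with θ₀ < θ₁ and let P_F ∈ (0,1). For each n ≥ 1, let γₙ be the least natural number such that ℙ(Bin(n,θ₀) ≤ γₙ) ≥ 1 − P_F, and let ζₙ = (P_F − ℙ(Bin(n,θ₀) > γₙ)) / ℙ(Bin(n,θ₀) = γₙ). Then the detection probability P_D(n) = ℙ(Bin(n,θ₁) > γₙ) + ζₙ·ℙ(Bin(n,θ₁) = γₙ) converges to 1 as n → ∞. -/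
/-- Binomial probability mass: `ℙ(Bin(n,θ) = l) = C(n,l) θ^l (1-θ)^(n-l)`. -/
noncomputable def binomPMF (n : ℕ) (θ : ℝ) (l : ℕ) : ℝ :=
  (n.choose l : ℝ) * θ ^ l * (1 - θ) ^ (n - l)

/-- Binomial CDF: `ℙ(Bin(n,θ) ≤ γ)`. -/
noncomputable def binomCDF (n : ℕ) (θ : ℝ) (γ : ℕ) : ℝ :=
  ∑ l ∈ Finset.range (γ + 1), binomPMF n θ l

/-- Binomial tail: `ℙ(Bin(n,θ) > γ)`. -/
noncomputable def binomTail (n : ℕ) (θ : ℝ) (γ : ℕ) : ℝ :=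
  ∑ l ∈ Finset.Icc (γ + 1) n, binomPMF n θ l

lemma pmf_nonneg {n : ℕ} {θ : ℝ} (h : θ ∈ Set.Ioo (0 : ℝ) 1) (l : ℕ) : 0 ≤ binomPMF n θ l := by
  have h1 := h.1
  have h2 : 0 < 1 - θ := by linarith [h.2]
  unfold binomPMF; positivity

lemma pmf_pos {n : ℕ} {θ : ℝ} (h : θ ∈ Set.Ioo (0 : ℝ) 1) {l : ℕ} (hl : l ≤ n) :
    0 < binomPMF n θ l := by
  have h1 := h.1
  have h2 : 0 < 1 - θ := by linarith [h.2]
  have h3 : 0 < n.choose l := Nat.choose_pos hl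
  unfold binomPMF; positivity

lemma pmf_sum (n : ℕ) (θ : ℝ) : ∑ l ∈ Finset.range (n + 1), binomPMF n θ l = 1 := by
  have := congrArg (Polynomial.eval θ) (bernsteinPolynomial.sum ℝ n)
  simpa [Polynomial.eval_finsetSum, bernsteinPolynomial, binomPMF] using this

lemma pmf_var (n : ℕ) (θ : ℝ) :
    ∑ l ∈ Finset.range (n + 1), ((n : ℝ) * θ - l) ^ 2 * binomPMF n θ l = n * θ * (1 - θ) := by
  have := congrArg (Polynomial.eval θ) (bernsteinPolynomial.variance ℝ n)
  simpa [Polynomial.eval_finsetSum, bernsteinPolynomial, binomPMF] using this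

lemma cdf_tail {n g : ℕ} (θ : ℝ) (hg : g ≤ n) : binomCDF n θ g + binomTail n θ g = 1 := by
  rw [← pmf_sum n θ]
  unfold binomCDF binomTail
  have : Finset.Icc (g + 1) n = Finset.Ico (g + 1) (n + 1) := by ext; simp
  rw [this, Finset.sum_range_add_sum_Ico _ (by omega)]

lemma cheb {n : ℕ} {θ δ : ℝ} (h : θ ∈ Set.Ioo (0 : ℝ) 1) (hn : 1 ≤ n) (s : Finset ℕ)
    (hs : s ⊆ Finset.range (n + 1)) (hd : ∀ l ∈ s, ((n : ℝ) * δ) ^ 2 ≤ ((n : ℝ) * θ - l) ^ 2) :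
    (n : ℝ) * δ ^ 2 * ∑ l ∈ s, binomPMF n θ l ≤ 1 := by
  have hn' : (0 : ℝ) < n := by exact_mod_cast hn
  have a : ((n : ℝ) * δ) ^ 2 * ∑ l ∈ s, binomPMF n θ l ≤ n * θ * (1 - θ) := by
    rw [← pmf_var, Finset.mul_sum]
    calc _ ≤ ∑ l ∈ s, ((n : ℝ) * θ - l) ^ 2 * binomPMF n θ l :=
          Finset.sum_le_sum fun l hl => mul_le_mul_of_nonneg_right (hd l hl) (pmf_nonneg h l)
      _ ≤ _ := Finset.sum_le_sum_of_subset_of_nonneg hs fun l _ _ =>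
          mul_nonneg (sq_nonneg _) (pmf_nonneg h l)
  have b : (n : ℝ) * θ * (1 - θ) ≤ n * 1 := by
    rw [mul_assoc]
    exact mul_le_mul_of_nonneg_left (by nlinarith [h.1, h.2]) hn'.le
  refine le_of_mul_le_mul_left ?_ hn'
  calc _ = ((n : ℝ) * δ) ^ 2 * ∑ l ∈ s, binomPMF n θ l := by ring
    _ ≤ _ := a.trans b

theorem stmt8 (θ₀ θ₁ P_F : ℝ) (h₀ : θ₀ ∈ Set.Ioo (0 : ℝ) 1) (h₁ : θ₁ ∈ Set.Ioo (0 : ℝ) 1)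
    (hlt : θ₀ < θ₁) (hPF : P_F ∈ Set.Ioo (0 : ℝ) 1) (γ : ℕ → ℕ)
    (hγ : ∀ n, 1 ≤ n →
      (1 - P_F ≤ binomCDF n θ₀ (γ n) ∧ ∀ k < γ n, binomCDF n θ₀ k < 1 - P_F)) :
    Filter.Tendsto
      (fun n : ℕ => binomTail n θ₁ (γ n) +
        ((P_F - binomTail n θ₀ (γ n)) / binomPMF n θ₀ (γ n)) * binomPMF n θ₁ (γ n))
      Filter.atTop (nhds 1) := by
  obtain ⟨δ, hδ⟩ : ∃ δ, δ = (θ₁ - θ₀) / 2 := ⟨_, rfl⟩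
  have hδ0 : 0 < δ := by linarith
  have hlim : Filter.Tendsto (fun n : ℕ => (n : ℝ) * δ ^ 2) Filter.atTop Filter.atTop :=
    tendsto_natCast_atTop_atTop.atTop_mul_const (by positivity)
  have hlow : Filter.Tendsto (fun n : ℕ => 1 - ((n : ℝ) * δ ^ 2)⁻¹) Filter.atTop (nhds 1) := by
    simpa using (tendsto_inv_atTop_zero.comp hlim).const_sub 1
  have key : ∀ n, 1 ≤ n → γ n ≤ n ∧
      0 ≤ (P_F - binomTail n θ₀ (γ n)) / binomPMF n θ₀ (γ n) ∧
      (P_F - binomTail n θ₀ (γ n)) / binomPMF n θ₀ (γ n) ≤ 1 := by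
    intro n hn
    obtain ⟨ha, hb⟩ := hγ n hn
    have hle : γ n ≤ n := by
      by_contra hc
      have := hb n (by omega)
      unfold binomCDF at this
      rw [pmf_sum] at this
      linarith [hPF.1]
    have hp := pmf_pos h₀ hle
    have hct := cdf_tail θ₀ hle
    refine ⟨hle, div_nonneg (by linarith) hp.le, (div_le_one hp).2 ?_⟩
    have : binomCDF n θ₀ (γ n) ≤ 1 - P_F + binomPMF n θ₀ (γ n) := by
      rcases Nat.eq_zero_or_pos (γ n) with h0 | h0
      · rw [h0]; simp [binomCDF]; linarith [hPF.2]
      · obtain ⟨k, hk⟩ : ∃ k, γ n = k + 1 := ⟨γ n - 1, by omega⟩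
        have := hb k (by omega)
        rw [hk]; unfold binomCDF at this ⊢
        rw [Finset.sum_range_succ]; linarith
    linarith
  refine tendsto_of_tendsto_of_tendsto_of_le_of_le' hlow tendsto_const_nhds ?_ ?_
  · filter_upwards [hlim.eventually_gt_atTop (P_F⁻¹), Filter.eventually_ge_atTop 1] with n hbig hn
    obtain ⟨hle, hz0, hz1⟩ := key n hn
    obtain ⟨ha, hb⟩ := hγ n hn
    have hn' : (0 : ℝ) < n := by exact_mod_cast hn
    have hpos : 0 < (n : ℝ) * δ ^ 2 := by positivity
    have hg : (γ n : ℝ) ≤ n * (θ₀ + δ) := by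
      by_contra! hc
      have hg0 : 0 < γ n := by
        have : (0 : ℝ) < γ n := lt_of_le_of_lt (mul_nonneg hn'.le (by linarith [h₀.1])) hc
        exact_mod_cast this
      obtain ⟨k, hk⟩ : ∃ k, γ n = k + 1 := ⟨γ n - 1, by omega⟩
      have h1 := hb k (by omega)
      have h2 := cdf_tail (n := n) (g := k) θ₀ (by omega)
      have h3 := cheb (δ := δ) h₀ hn (Finset.Icc (k + 1) n)
        (by intro x; simp) (by
          intro l hl
          have : γ n ≤ l := by rw [hk]; exact (Finset.mem_Icc.1 hl).1
          have : (γ n : ℝ) ≤ l := by exact_mod_cast this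
          rw [← neg_sq ((n : ℝ) * θ₀ - l)]
          exact pow_le_pow_left₀ (by positivity) (by linarith) 2)
      change (n : ℝ) * δ ^ 2 * binomTail n θ₀ k ≤ 1 at h3
      have h4 : 1 < (n : ℝ) * δ ^ 2 * P_F := by
        rwa [inv_lt_iff_one_lt_mul₀ hPF.1] at hbig
      have h5 := mul_lt_mul_of_pos_left (show P_F < binomTail n θ₀ k by linarith) hpos
      linarith
    have h3 := cheb (δ := δ) h₁ hn (Finset.range (γ n + 1))
      (by intro x; simp; omega) (by
        intro l hl
        have : l ≤ γ n := by simp at hl; omega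
        have : (l : ℝ) ≤ γ n := by exact_mod_cast this
        have e : θ₁ = θ₀ + δ + δ := by linarith
        exact pow_le_pow_left₀ (by positivity) (by rw [e]; linarith) 2)
    change (n : ℝ) * δ ^ 2 * binomCDF n θ₁ (γ n) ≤ 1 at h3
    have h4 : binomCDF n θ₁ (γ n) ≤ ((n : ℝ) * δ ^ 2)⁻¹ := by
      rw [← one_div, le_div_iff₀ hpos]; linarith
    have h5 := cdf_tail θ₁ hle
    have h6 := mul_nonneg hz0 (pmf_nonneg (n := n) h₁ (γ n))
    linarith
  · filter_upwards [Filter.eventually_ge_atTop 1] with n hn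
    obtain ⟨hle, hz0, hz1⟩ := key n hn
    have h5 := cdf_tail θ₁ hle
    have h6 := mul_le_mul_of_nonneg_right hz1 (pmf_nonneg (n := n) h₁ (γ n))
    have h7 : binomPMF n θ₁ (γ n) ≤ binomCDF n θ₁ (γ n) :=
      Finset.single_le_sum (fun l _ => pmf_nonneg h₁ l) (by simp)
    linarith
end

section
/- (Remark 1, c → ∞ limit) Let n ≥ 1, P_F ∈ (0,1), and α ∈ (0,1) be fixed. For c > 0 set θ₀(c) = 2·Q(c) and θ₁(c) = 2·Q(αc), let γ(c) be the least natural number with ∑_{l=0}^{γ(c)} C(n,l) θ₀(c)^l (1−θ₀(c))^{n−l} ≥ 1 − P_F, let ζ(c) = (P_F − ℙ(Bin(n,θ₀(c)) > γ(c))) / ℙ(Bin(n,θ₀(c)) = γ(c)), and let P_D(c) = ℙ(Bin(n,θ₁(c)) > γ(c)) + ζ(c)·ℙ(Bin(n,θ₁(c)) = γ(c)). Then P_D(c) → P_F as c → ∞. -/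
open MeasureTheory ProbabilityTheory

/-- The standard normal tail function `Q(x) = ℙ(Z > x)` for `Z ~ N(0,1)`. -/
noncomputable def Q (x : ℝ) : ℝ := ((gaussianReal 0 1) (Set.Ioi x)).toReal

lemma Q_tendsto : Filter.Tendsto Q Filter.atTop (nhds 0) := by
  have h : Q = fun x => 1 - cdf (gaussianReal 0 1) x := by
    funext x
    rw [cdf_eq_real, ← probReal_compl_eq_one_sub measurableSet_Iic, Set.compl_Iic]
    rfl
  rw [h]
  simpa using (tendsto_cdf_atTop (gaussianReal 0 1)).const_sub 1

theorem stmt10 (n : ℕ) (hn : 1 ≤ n) (P_F α : ℝ) (hPF : P_F ∈ Set.Ioo (0 : ℝ) 1)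
    (hα : α ∈ Set.Ioo (0 : ℝ) 1) (γ : ℝ → ℕ)
    (hγ : ∀ c : ℝ, 0 < c →
      (1 - P_F ≤ binomCDF n (2 * Q c) (γ c) ∧
        ∀ k < γ c, binomCDF n (2 * Q c) k < 1 - P_F)) :
    Filter.Tendsto
      (fun c : ℝ => binomTail n (2 * Q (α * c)) (γ c) +
        ((P_F - binomTail n (2 * Q c) (γ c)) / binomPMF n (2 * Q c) (γ c)) *
          binomPMF n (2 * Q (α * c)) (γ c))
      Filter.atTop (nhds P_F) := by
  have h0 : Filter.Tendsto (fun c => 2 * Q c) Filter.atTop (nhds 0) := by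
    simpa using Q_tendsto.const_mul 2
  have h1 : Filter.Tendsto (fun c => 2 * Q (α * c)) Filter.atTop (nhds 0) :=
    h0.comp (Filter.tendsto_id.const_mul_atTop hα.1)
  have hpc : Continuous (fun θ => binomPMF n θ 0) := by
    unfold binomPMF; fun_prop
  have htc : Continuous (fun θ => binomTail n θ 0) := by
    unfold binomTail binomPMF; fun_prop
  have hp0 : binomPMF n 0 0 = 1 := by simp [binomPMF]
  have ht0 : binomTail n 0 0 = 0 := by
    unfold binomTail
    refine Finset.sum_eq_zero fun l hl => ?_
    have : l ≠ 0 := by have := (Finset.mem_Icc.1 hl).1; omega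
    simp [binomPMF, this]
  have P := hpc.tendsto 0
  have T := htc.tendsto 0
  rw [hp0] at P
  rw [ht0] at T
  have hev : ∀ᶠ c in Filter.atTop, γ c = 0 := by
    filter_upwards [(P.comp h0).eventually (lt_mem_nhds (show 1 - P_F < 1 by linarith [hPF.1])),
      Filter.eventually_gt_atTop 0] with c hc hc0
    by_contra hne
    have := (hγ c hc0).2 0 (Nat.pos_of_ne_zero hne)
    simp only [binomCDF, zero_add, Finset.sum_range_one] at this
    exact absurd this (not_lt.2 hc.le)
  have key := (T.comp h1).add
    (((T.comp h0).const_sub P_F).div (P.comp h0) one_ne_zero |>.mul (P.comp h1))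
  have e : (0 : ℝ) + (P_F - 0) / 1 * 1 = P_F := by ring
  rw [e] at key
  refine key.congr' ?_
  filter_upwards [hev] with c hc
  simp [hc]
end
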